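/- Let $H$ be a real Hilbert space. For a set-valued operator $A\colon H\rightrightarrows H$ write $\operatorname{gra}A=\{(x,u):u\in Ax\}$, $\operatorname{dom}A=\{x:Ax\neq\emptyset\}$, $\operatorname{zer}A=\{x:0\in Ax\}$, and let $A^{-1}$ be the operator with graph $\{(u,x):u\in Ax\}$. $A$ is monotone if $\langle x-y,u-v\rangle\ge 0$ for all $(x,u),(y,v)\in\operatorname{gra}A$; it is maximally monotone if it is monotone and no monotone operator has a graph properly containing $\operatorname{gra}A$; it is paramonotone if it is monotone and, whenever $(x,u),(y,v)\in\operatorname{gra}A$ satisfy $\langle x-y,u-v\rangle=0$, also $(x,v),(y,u)\in\operatorname{gra}A$. For $\mu>0$ and a nonempty closed convex set $X\subseteq\operatorname{dom}A$ with metric projection $P_X$, $A$ is $\mu$-strongly monotone relative to $X$ if $\langle v-u,y-P_X(y)\rangle\ge\mu\|y-P_X(y)\|^2$ for all $(y,v)\in\operatorname{gra}A$ and all $u\in A(P_X(y))$. For $A$ maximally monotone and $\gamma>0$, $J_{\gamma A}:=(\mathrm{Id}+\gamma A)^{-1}$ is the resolvent, which is single-valued with full domain. A sequence $(s_n)_{n\in\mathbb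 N}$ converges $R$-linearly to $s$ if there are $C\ge 0$ and $r\in(0,1)$ with $\|s_n-s\|\le Cr^n$ for all $n\in\mathbb N$. Let $\Gamma\subseteq(0,\infty)$ be a nonempty closed interval, and let $A_1,A_2\colon H\rightrightarrows H$ be maximally monotone and paramonotone operators with $P:=\operatorname{zer}(A_1+A_2)\neq\emptyset$. Let $D:=\operatorname{zer}(A_1^{-1}-A_2^{-1}\circ(-\mathrm{Id}))$ and let $\mu,\rho>0$. Suppose that $A_1$ or $A_2$ is $\mu$-strongly monotone relative to $P$, and that $A_1^{-1}$ is $\rho$-strongly monotone relative to $D$ or $A_2^{-1}$ is $\rho$-strongly monotone relative to $-D$. Let $(\gamma_n)_{n\in\mathbb N}\subseteq\Gamma$ converge $R$-linearly to $\gamma^*\in\Gamma$, and let $T_\gamma:=\mathrm{Id}-J_{\gamma A_1}+J_{\gamma A_2}\circ(2J_{\gamma A_1}-\mathrm{Id})$. Given $x_0\in H$, set $z_0=J_{\gamma_0A_1}x_0$ and for each $n\in\mathbb N$ define $$y_n=J_{\gamma_nA_2}(2z_n-x_n),\quad w_n=x_n-z_n+y_n,\quad z_{n+1}=J_{\gamma_nA_1}w_n,\quad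 x_{n+1}=\tfrac{\gamma_{n+1}}{\gamma_n}w_n+\Bigl(1-\tfrac{\gamma_{n+1}}{\gamma_n}\Bigr)z_{n+1}.$$ Then: (i) $(x_n)$ and $(w_n)$ converge $R$-linearly to the same point $x\in\operatorname{Fix}T_{\gamma^*}:=\{x:T_{\gamma^*}x=x\}$; (ii) $(z_n)$ and $(y_n)$ converge $R$-linearly to the same point $z:=J_{\gamma^*A_1}x$, and $z\in P$; (iii) the sequences $\bigl(\tfrac{x_n-z_n}{\gamma_n}\bigr)$ and $\bigl(\tfrac{w_n-y_n}{\gamma_n}\bigr)$ converge $R$-linearly to the point $g:=\tfrac{x-z}{\gamma^*}$, and $g\in D$. -/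

import Mathlib

open scoped Pointwise RealInnerProductSpace

namespace MonOp

/-- The graph of a set-valued operator. -/
def gra {H : Type*} (A : H → Set H) : Set (H × H) := {p | p.2 ∈ A p.1}

/-- The domain of a set-valued operator. -/
def dom {H : Type*} (A : H → Set H) : Set H := {x | (A x).Nonempty}

/-- The zeros of a set-valued operator. -/
def zer {H : Type*} [Zero H] (A : H → Set H) : Set H := {x | (0 : H) ∈ A x}

/-- The inverse of a set-valued operator. -/
def inv {H : Type*} (A : H → Set H) : H → Set H := fun u => {x | u ∈ A x}

section Hilbert

variable {H : Type*} [NormedAddCommGroup H] [InnerProductSpace ℝ H]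

/-- A set-valued operator is monotone. -/
def IsMonotone (A : H → Set H) : Prop :=
  ∀ ⦃x u y v : H⦄, (x, u) ∈ gra A → (y, v) ∈ gra A → 0 ≤ ⟪x - y, u - v⟫

/-- A set-valued operator is maximally monotone: it is monotone, and no monotone operator has
a graph properly containing its graph. -/
def IsMaximallyMonotone (A : H → Set H) : Prop :=
  IsMonotone A ∧ ∀ B : H → Set H, IsMonotone B → gra A ⊆ gra B → gra B = gra A

/-- A set-valued operator is paramonotone. -/
def IsParamonotone (A : H → Set H) : Prop :=
  IsMonotone A ∧ ∀ ⦃x u y v : H⦄, (x, u) ∈ gra A → (y, v) ∈ gra A → ⟪x - y, u - v⟫ = 0 →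
    (x, v) ∈ gra A ∧ (y, u) ∈ gra A

/-- `p` is a metric projection of `y` onto `X`. -/
def IsProj (X : Set H) (y p : H) : Prop := p ∈ X ∧ ∀ q ∈ X, ‖y - p‖ ≤ ‖y - q‖

/-- `A` is `μ`-strongly monotone relative to the nonempty closed convex set `X ⊆ dom A`. In a
Hilbert space the point `p` with `IsProj X y p` exists and is unique; it is `P_X y`. -/
structure IsStronglyMonotoneRel (A : H → Set H) (μ : ℝ) (X : Set H) : Prop where
  pos : 0 < μ
  nonempty : X.Nonempty
  closed : IsClosed X
  convex : Convex ℝ X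
  subset_dom : X ⊆ dom A
  le_inner : ∀ ⦃y v p u : H⦄, (y, v) ∈ gra A → IsProj X y p → u ∈ A p →
    μ * ‖y - p‖ ^ 2 ≤ ⟪v - u, y - p⟫

/-- The resolvent `J_A = (Id + A)⁻¹` as a map `H → H`: the value at `x` is a chosen element of
the set `(Id + A)⁻¹ x`. For a maximally monotone `A` on a Hilbert space that set is always a
singleton. -/
noncomputable def resolvent (A : H → Set H) (x : H) : H :=
  Classical.epsilon fun p : H => p ∈ inv (fun q => {q} + A q) x

/-- The Douglas–Rachford operator `T_γ = Id - J_{γA₁} + J_{γA₂} ∘ (2 J_{γA₁} - Id)`. -/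
noncomputable def drOp (A₁ A₂ : H → Set H) (γ : ℝ) (x : H) : H :=
  x - resolvent (γ • A₁) x + resolvent (γ • A₂) ((2 : ℝ) • resolvent (γ • A₁) x - x)

/-- The primal solution set `zer (A₁ + A₂)`. -/
def primalSol (A₁ A₂ : H → Set H) : Set H := zer (A₁ + A₂)

/-- The dual solution set `zer (A₁⁻¹ - A₂⁻¹ ∘ (-Id))`. -/
def dualSol (A₁ A₂ : H → Set H) : Set H := zer (inv A₁ - fun y => inv A₂ (-y))

end Hilbert

/-- A sequence converges `R`-linearly to a point. -/
def ConvergesRLinearly {E : Type*} [NormedAddCommGroup E] (s : ℕ → E) (p : E) : Prop :=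
  ∃ C : ℝ, 0 ≤ C ∧ ∃ r ∈ Set.Ioo (0 : ℝ) 1, ∀ n : ℕ, ‖s n - p‖ ≤ C * r ^ n

end MonOp

/-!
A run of the iteration is determined by points `(z, g)` and `(y, h)` of the graphs of `A₁` and `A₂`:
a step takes `z + γ • g` to `y + γ • g`. Its squared distance to `p + γ • u`, for a primal solution
`p` and a dual solution `u`, decreases by `‖z - y‖² + 2 γ G`, where `G` is a sum of two monotonicity
products. The two relative strong monotonicity assumptions let `G` control the distance of `z` to
the primal and of `g` to the dual solutions, up to `‖z - y‖`. Hence a step with little progress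
starts close to the solution set `P + γ • D`, so that in every case a step contracts the distance to
this set by a factor `κ < 1` that is uniform for step sizes in a compact subset of `(0, ∞)`.

Changing the step size from `γ` to `γ'` costs a factor at most `1 + |γ' - γ| / γ`, which tends to
`1`; thus the distance, and with it `‖z - y‖`, decays geometrically. By firm nonexpansiveness
`‖z - y‖` bounds the increments of `z` and, up to a constant, of `g`. Their limits are a primal-dual
pair, because maximally monotone operators have closed graphs.

Single-valuedness and full domain of the resolvents come from Minty's theorem, proved by minimizing
the Fitzpatrick function plus half of the squared norm.
-/

namespace MonOp

open Asymptotics Filter Metric Topology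

section RLinear

variable {E F : Type*} [NormedAddCommGroup E] [NormedAddCommGroup F]

lemma convergesRLinearly_iff_exists_isBigO {s : ℕ → E} {p : E} :
    ConvergesRLinearly s p ↔
      ∃ r ∈ Set.Ioo (0 : ℝ) 1, (fun n => s n - p) =O[atTop] fun n => r ^ n := by
  constructor
  · rintro ⟨C, -, r, hr, hs⟩
    exact ⟨r, hr, .of_bound C (.of_forall fun n => by simpa [abs_of_pos hr.1] using hs n)⟩
  · rintro ⟨r, hr, hs⟩
    obtain ⟨C, hC, hs⟩ := bound_of_isBigO_nat_atTop hs
    exact ⟨C, hC.le, r, hr, fun n => by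
      simpa [abs_of_pos hr.1] using hs (pow_ne_zero n hr.1.ne')⟩

lemma isBigO_pow_of_le {r r' : ℝ} (hr : 0 ≤ r) (h : r ≤ r') :
    (fun n : ℕ => r ^ n) =O[atTop] fun n => r' ^ n :=
  .of_norm_le fun n => by
    rw [norm_pow, Real.norm_of_nonneg hr]
    exact pow_le_pow_left₀ hr h n

namespace ConvergesRLinearly

lemma tendsto {s : ℕ → E} {p : E} (h : ConvergesRLinearly s p) : Tendsto s atTop (𝓝 p) := by
  obtain ⟨r, hr, hs⟩ := convergesRLinearly_iff_exists_isBigO.1 h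
  exact tendsto_sub_nhds_zero_iff.1
    (hs.trans_tendsto (tendsto_pow_atTop_nhds_zero_of_lt_one hr.1.le hr.2))

lemma of_isBigO {s : ℕ → E} {p : E} {t : ℕ → F} {q : F} (ht : ConvergesRLinearly t q)
    (h : (fun n => s n - p) =O[atTop] fun n => t n - q) : ConvergesRLinearly s p := by
  obtain ⟨r, hr, ht⟩ := convergesRLinearly_iff_exists_isBigO.1 ht
  exact convergesRLinearly_iff_exists_isBigO.2 ⟨r, hr, h.trans ht⟩

lemma add {s t : ℕ → E} {p q : E} (hs : ConvergesRLinearly s p) (ht : ConvergesRLinearly t q) :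
    ConvergesRLinearly (fun n => s n + t n) (p + q) := by
  obtain ⟨r₁, hr₁, hs⟩ := convergesRLinearly_iff_exists_isBigO.1 hs
  obtain ⟨r₂, hr₂, ht⟩ := convergesRLinearly_iff_exists_isBigO.1 ht
  refine convergesRLinearly_iff_exists_isBigO.2
    ⟨max r₁ r₂, ⟨lt_max_of_lt_left hr₁.1, max_lt hr₁.2 hr₂.2⟩, ?_⟩
  simp only [add_sub_add_comm]
  exact (hs.trans (isBigO_pow_of_le hr₁.1.le (le_max_left _ _))).add
    (ht.trans (isBigO_pow_of_le hr₂.1.le (le_max_right _ _)))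

lemma sub {s t : ℕ → E} {p q : E} (hs : ConvergesRLinearly s p) (ht : ConvergesRLinearly t q) :
    ConvergesRLinearly (fun n => s n - t n) (p - q) := by
  have hneg : ConvergesRLinearly (fun n => -t n) (-q) :=
    ht.of_isBigO (isBigO_of_le atTop fun n => by rw [neg_sub_neg, norm_sub_rev])
  simpa only [sub_eq_add_neg] using hs.add hneg

lemma smul [NormedSpace ℝ E] {c : ℕ → ℝ} {s : ℕ → E} {a : ℝ} {p : E}
    (hc : ConvergesRLinearly c a) (hs : ConvergesRLinearly s p) :
    ConvergesRLinearly (fun n => c n • s n) (a • p) := by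
  have hscalar : ConvergesRLinearly (fun n => c n • p) (a • p) :=
    hc.of_isBigO (.of_bound ‖p‖ (.of_forall fun n => by rw [← sub_smul, norm_smul, mul_comm]))
  have hvector : ConvergesRLinearly (fun n => c n • (s n - p)) 0 :=
    hs.of_isBigO (by
      simpa using (hc.tendsto.isBigO_one ℝ).smul (isBigO_refl (fun n => s n - p) atTop))
  simpa [smul_sub] using hvector.add hscalar

lemma exists_of_succ_sub [CompleteSpace E] {s : ℕ → E}
    (h : ConvergesRLinearly (fun n => s (n + 1) - s n) 0) : ∃ p, ConvergesRLinearly s p := by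
  obtain ⟨C, hC, r, hr, hs⟩ := h
  have hdist : ∀ n, dist (s n) (s (n + 1)) ≤ C * r ^ n := fun n => by
    simpa [dist_comm (s n), dist_eq_norm] using hs n
  obtain ⟨p, hp⟩ := cauchySeq_tendsto_of_complete (cauchySeq_of_le_geometric r C hr.2 hdist)
  refine ⟨p, C / (1 - r), div_nonneg hC (sub_nonneg.2 hr.2.le), r, hr, fun n => ?_⟩
  rw [← dist_eq_norm, div_mul_eq_mul_div]
  exact dist_le_of_le_geometric_of_tendsto r C hr.2 hdist hp n

end ConvergesRLinearly

lemma convergesRLinearly_zero_of_succ_le_mul {d c : ℕ → ℝ} {κ : ℝ} (hd : ∀ n, 0 ≤ d n)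
    (h : ∀ n, d (n + 1) ≤ c n * d n) (hc : Tendsto c atTop (𝓝 κ)) (hκ : κ < 1) :
    ConvergesRLinearly d 0 := by
  obtain ⟨r, hr, hr₁⟩ := exists_between (max_lt hκ one_pos)
  obtain ⟨hκr, hr₀⟩ := max_lt_iff.1 hr
  obtain ⟨N, hN⟩ := eventually_atTop.1 (hc.eventually_le_const hκr)
  refine convergesRLinearly_iff_exists_isBigO.2 ⟨r, ⟨hr₀, hr₁⟩, .of_bound (d N / r ^ N) ?_⟩
  filter_upwards [eventually_ge_atTop N] with n hn
  obtain ⟨k, rfl⟩ := Nat.exists_eq_add_of_le hn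
  have hgeom : d (N + k) ≤ r ^ k * d N :=
    le_geom (u := fun i => d (N + i)) hr₀.le k fun i _ =>
      (h (N + i)).trans (mul_le_mul_of_nonneg_right (hN _ (Nat.le_add_right N i)) (hd _))
  calc ‖d (N + k) - 0‖ ≤ r ^ k * d N := by rwa [sub_zero, Real.norm_of_nonneg (hd _)]
    _ = d N / r ^ N * ‖r ^ (N + k)‖ := by
      rw [norm_pow, Real.norm_of_nonneg hr₀.le, pow_add]
      field_simp

lemma exists_Icc_of_tendsto_pos {γ : ℕ → ℝ} {γs : ℝ} (h : Tendsto γ atTop (𝓝 γs))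
    (hγ : ∀ n, 0 < γ n) (hγs : 0 < γs) : ∃ a b : ℝ, 0 < a ∧ ∀ n, γ n ∈ Set.Icc a b := by
  obtain ⟨b, hb⟩ := h.bddAbove_range
  obtain ⟨c, hc⟩ := (h.inv₀ hγs.ne').bddAbove_range
  have hinv : ∀ n, (γ n)⁻¹ ≤ c := fun n => hc ⟨n, rfl⟩
  have hc₀ : 0 < c := (inv_pos.2 (hγ 0)).trans_le (hinv 0)
  exact ⟨c⁻¹, b, inv_pos.2 hc₀, fun n => ⟨inv_le_of_inv_le₀ (hγ n) (hinv n), hb ⟨n, rfl⟩⟩⟩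

end RLinear

section ProximalMinimization

variable {E : Type*} [NormedAddCommGroup E] [InnerProductSpace ℝ E]

lemma norm_sub_sq_le_of_le_snd_add_half_norm_sq {C : Set (E × ℝ)} (hC : Convex ℝ C) {m : ℝ}
    (hm : ∀ q ∈ C, m ≤ q.2 + ‖q.1‖ ^ 2 / 2) {q q' : E × ℝ} (hq : q ∈ C) (hq' : q' ∈ C) :
    ‖q.1 - q'.1‖ ^ 2 ≤
      4 * ((q.2 + ‖q.1‖ ^ 2 / 2) + (q'.2 + ‖q'.1‖ ^ 2 / 2) - 2 * m) := by
  have hmid := hm _ (hC hq hq' (a := 1 / 2) (b := 1 / 2) (by norm_num) (by norm_num)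
    (by norm_num))
  simp only [Prod.fst_add, Prod.snd_add, Prod.smul_fst, Prod.smul_snd, smul_eq_mul, ← smul_add,
    norm_smul, mul_pow] at hmid
  norm_num at hmid
  linarith [parallelogram_law_with_norm ℝ q.1 q'.1]

lemma exists_isMinOn_snd_add_half_norm_sq [CompleteSpace E] {C : Set (E × ℝ)}
    (hne : C.Nonempty) (hclosed : IsClosed C) (hconv : Convex ℝ C)
    (hbdd : BddBelow ((fun q : E × ℝ => q.2 + ‖q.1‖ ^ 2 / 2) '' C)) :
    ∃ q ∈ C, IsMinOn (fun q : E × ℝ => q.2 + ‖q.1‖ ^ 2 / 2) C q := by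
  set φ : E × ℝ → ℝ := fun q => q.2 + ‖q.1‖ ^ 2 / 2 with hφ
  set m := sInf (φ '' C)
  have hm : ∀ q ∈ C, m ≤ φ q := fun q hq => csInf_le hbdd ⟨q, hq, rfl⟩
  obtain ⟨v, -, hv, hmem⟩ := exists_seq_tendsto_sInf (hne.image φ) hbdd
  choose s hsC hs using hmem
  have hlim : Tendsto (fun n => φ (s n)) atTop (𝓝 m) := hv.congr fun n => (hs n).symm
  have hcauchy : CauchySeq fun n => (s n).1 := by
    rw [cauchySeq_iff_tendsto_dist_atTop_0]
    have hsum : Tendsto (fun n : ℕ × ℕ => √(4 * (φ (s n.1) + φ (s n.2) - 2 * m))) atTop (𝓝 0) := by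
      rw [← prod_atTop_atTop_eq]
      have := ((((hlim.comp tendsto_fst).add (hlim.comp tendsto_snd)).sub_const
        (2 * m)).const_mul 4).sqrt
      simpa [m, two_mul] using this
    refine squeeze_zero (fun _ => dist_nonneg) (fun n => ?_) hsum
    rw [dist_eq_norm]
    exact Real.le_sqrt_of_sq_le
      (norm_sub_sq_le_of_le_snd_add_half_norm_sq hconv hm (hsC n.1) (hsC n.2))
  obtain ⟨x, hx⟩ := cauchySeq_tendsto_of_complete hcauchy
  have hheight : Tendsto (fun n => (s n).2) atTop (𝓝 (m - ‖x‖ ^ 2 / 2)) :=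
    (hlim.sub ((hx.norm.pow 2).div_const 2)).congr fun n => by simp [hφ]
  refine ⟨(x, m - ‖x‖ ^ 2 / 2),
    hclosed.mem_of_tendsto (hx.prodMk_nhds hheight) (.of_forall hsC), fun q hq => ?_⟩
  simpa [hφ] using hm q hq

lemma inner_sub_add_sub_nonneg_of_isMinOn {C : Set (E × ℝ)} (hC : Convex ℝ C) {q q' : E × ℝ}
    (hmin : IsMinOn (fun q : E × ℝ => q.2 + ‖q.1‖ ^ 2 / 2) C q) (hq : q ∈ C) (hq' : q' ∈ C) :
    0 ≤ ⟪q.1, q'.1 - q.1⟫ + (q'.2 - q.2) := by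
  have hderiv := (hasFDerivAt_snd (𝕜 := ℝ) (p := q)).add
    ((hasFDerivAt_fst (𝕜 := ℝ) (p := q)).norm_sq.mul_const 2⁻¹)
  simp only [div_eq_mul_inv] at hmin
  have := hmin.localize.hasFDerivWithinAt_nonneg hderiv.hasFDerivWithinAt
    (sub_mem_posTangentConeAt_of_segment_subset (hC.segment_subset hq hq'))
  simpa [add_comm] using this

end ProximalMinimization

section Resolvent

variable {H : Type*} [NormedAddCommGroup H] [InnerProductSpace ℝ H] {A : H → Set H}

lemma isMaximallyMonotone_iff : IsMaximallyMonotone A ↔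
    IsMonotone A ∧ ∀ x u, (∀ y v, v ∈ A y → 0 ≤ ⟪x - y, u - v⟫) → u ∈ A x := by
  refine and_congr_right fun hA => ⟨fun hmax x u h => ?_, fun hmem B hB hAB => ?_⟩
  · set B : H → Set H := fun y => {v | v ∈ A y ∨ (y = x ∧ v = u)} with hBdef
    have hB : IsMonotone B := by
      rintro x₁ u₁ x₂ u₂ (h₁ | ⟨rfl, rfl⟩) (h₂ | ⟨rfl, rfl⟩)
      · exact hA h₁ h₂
      · rw [← inner_neg_neg, neg_sub, neg_sub]
        exact h _ _ h₁
      · exact h _ _ h₂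
      · simp
    have hxu : (x, u) ∈ gra B := Or.inr ⟨rfl, rfl⟩
    rwa [hmax B hB fun _ => Or.inl] at hxu
  · exact (hAB.antisymm fun _ hxu => hmem _ _ fun _ _ hv => hB hxu (hAB hv)).symm

lemma IsMaximallyMonotone.mem_of_forall_inner_nonneg (hA : IsMaximallyMonotone A) {x u : H}
    (h : ∀ y v, v ∈ A y → 0 ≤ ⟪x - y, u - v⟫) : u ∈ A x :=
  (isMaximallyMonotone_iff.1 hA).2 x u h

lemma IsMaximallyMonotone.mem_of_tendsto (hA : IsMaximallyMonotone A) {s t : ℕ → H} {x u : H}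
    (h : ∀ n, t n ∈ A (s n)) (hs : Tendsto s atTop (𝓝 x)) (ht : Tendsto t atTop (𝓝 u)) :
    u ∈ A x :=
  hA.mem_of_forall_inner_nonneg fun y v hv =>
    ge_of_tendsto' ((hs.sub_const y).inner (ht.sub_const v)) fun n => hA.1 (h n) hv

lemma IsMaximallyMonotone.exists_mem (hA : IsMaximallyMonotone A) : ∃ y v, v ∈ A y := by
  by_contra! hempty
  exact hempty 0 0 (hA.mem_of_forall_inner_nonneg fun y v hv => absurd hv (hempty y v))

lemma IsMaximallyMonotone.smul (hA : IsMaximallyMonotone A) {γ : ℝ} (hγ : 0 < γ) :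
    IsMaximallyMonotone (γ • A) := by
  refine isMaximallyMonotone_iff.2 ⟨?_, fun x u h => ?_⟩
  · rintro x _ y _ ⟨u, hu, rfl⟩ ⟨v, hv, rfl⟩
    simp only [← smul_sub, real_inner_smul_right]
    exact mul_nonneg hγ.le (hA.1 hu hv)
  · refine (Set.mem_smul_set_iff_inv_smul_mem₀ hγ.ne' _ _).2
      (hA.mem_of_forall_inner_nonneg fun y v hv => ?_)
    have := h y (γ • v) (Set.smul_mem_smul_set hv)
    rw [← smul_inv_smul₀ hγ.ne' u, ← smul_sub, real_inner_smul_right] at this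
    exact nonneg_of_mul_nonneg_right this hγ

lemma IsMaximallyMonotone.comp_add_right (hA : IsMaximallyMonotone A) (a : H) :
    IsMaximallyMonotone fun x => A (x + a) := by
  refine isMaximallyMonotone_iff.2 ⟨fun x u y v hu hv => ?_, fun x u h => ?_⟩
  · simpa using hA.1 (x := x + a) (y := y + a) hu hv
  · refine hA.mem_of_forall_inner_nonneg fun y v hv => ?_
    simpa [sub_sub_eq_add_sub] using h (y - a) v (by simpa using hv)

/-- The epigraph of the Fitzpatrick function `(x, u) ↦ sup {⟪x, v⟫ + ⟪y, u⟫ - ⟪y, v⟫ : v ∈ A y}`.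
The `L²` product makes `H × H` a Hilbert space, on which the argument of the function lives. -/
def fitzpatrickEpigraph (A : H → Set H) : Set (WithLp 2 (H × H) × ℝ) :=
  {q | ∀ y v, v ∈ A y → ⟪q.1, WithLp.toLp 2 (v, y)⟫ - ⟪y, v⟫ ≤ q.2}

lemma convex_fitzpatrickEpigraph (A : H → Set H) : Convex ℝ (fitzpatrickEpigraph A) := by
  intro q hq q' hq' a b ha hb hab y v hv
  have h := add_le_add (mul_le_mul_of_nonneg_left (hq y v hv) ha)
    (mul_le_mul_of_nonneg_left (hq' y v hv) hb)
  simp only [Prod.fst_add, Prod.snd_add, Prod.smul_fst, Prod.smul_snd, inner_add_left,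
    real_inner_smul_left, smul_eq_mul]
  linear_combination h + ⟪y, v⟫ * hab

lemma isClosed_fitzpatrickEpigraph (A : H → Set H) : IsClosed (fitzpatrickEpigraph A) := by
  simp only [fitzpatrickEpigraph, Set.ofPred_forall]
  exact isClosed_iInter fun y => isClosed_iInter fun v => isClosed_iInter fun _ =>
    isClosed_le (by fun_prop) (by fun_prop)

lemma IsMonotone.mem_fitzpatrickEpigraph (hA : IsMonotone A) {x u : H} (h : u ∈ A x) :
    (WithLp.toLp 2 (x, u), ⟪x, u⟫) ∈ fitzpatrickEpigraph A := by
  intro y v hv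
  have := hA h hv
  simp only [WithLp.prod_inner_apply, inner_sub_left, inner_sub_right] at this ⊢
  linarith [real_inner_comm u y]

lemma IsMaximallyMonotone.inner_le_of_mem_fitzpatrickEpigraph (hA : IsMaximallyMonotone A)
    {q : WithLp 2 (H × H) × ℝ} (hq : q ∈ fitzpatrickEpigraph A) : ⟪q.1.fst, q.1.snd⟫ ≤ q.2 := by
  by_contra! hlt
  have hmem : q.1.snd ∈ A q.1.fst := hA.mem_of_forall_inner_nonneg fun y v hv => by
    have := hq y v hv
    simp only [WithLp.prod_inner_apply, WithLp.ofLp_fst, WithLp.ofLp_snd, inner_sub_left,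
      inner_sub_right] at this ⊢
    linarith [real_inner_comm q.1.snd y]
  have := hq _ _ hmem
  simp only [WithLp.prod_inner_apply, WithLp.ofLp_fst, WithLp.ofLp_snd] at this
  linarith [real_inner_comm q.1.snd q.1.fst]

lemma IsMaximallyMonotone.exists_isMinOn_fitzpatrickEpigraph [CompleteSpace H]
    (hA : IsMaximallyMonotone A) : ∃ q ∈ fitzpatrickEpigraph A,
      IsMinOn (fun q => q.2 + ‖q.1‖ ^ 2 / 2) (fitzpatrickEpigraph A) q := by
  obtain ⟨y, v, hv⟩ := hA.exists_mem
  refine exists_isMinOn_snd_add_half_norm_sq ⟨_, hA.1.mem_fitzpatrickEpigraph hv⟩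
    (isClosed_fitzpatrickEpigraph A) (convex_fitzpatrickEpigraph A) ⟨0, ?_⟩
  rintro _ ⟨q, hq, rfl⟩
  simp only [WithLp.prod_norm_sq_eq_of_L2]
  linarith [hA.inner_le_of_mem_fitzpatrickEpigraph hq, norm_add_sq_real q.1.fst q.1.snd,
    sq_nonneg ‖q.1.fst + q.1.snd‖]

-- Minty's theorem at the origin: optimality of a minimizer `(x, u)` gives
-- `‖x + u‖² ≤ ⟪-u - y, -x - v⟫` on the graph of `A`; maximality then puts `(-u, -x)` itself into
-- the graph, which forces `x + u = 0`.
lemma IsMaximallyMonotone.exists_neg_mem [CompleteSpace H] (hA : IsMaximallyMonotone A) :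
    ∃ p, -p ∈ A p := by
  obtain ⟨q, hq, hmin⟩ := hA.exists_isMinOn_fitzpatrickEpigraph
  set x := q.1.fst
  set u := q.1.snd
  have hoptimal : ∀ y v, v ∈ A y → ‖x + u‖ ^ 2 ≤ ⟪-u - y, -x - v⟫ := fun y v hv => by
    have h := inner_sub_add_sub_nonneg_of_isMinOn (convex_fitzpatrickEpigraph A) hmin hq
      (hA.1.mem_fitzpatrickEpigraph hv)
    have hle : ⟪x, u⟫ ≤ q.2 := hA.inner_le_of_mem_fitzpatrickEpigraph hq
    simp only [WithLp.prod_inner_apply, WithLp.ofLp_fst, WithLp.ofLp_snd, inner_sub_left,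
      inner_sub_right, inner_neg_left, inner_neg_right,
      real_inner_self_eq_norm_sq] at h ⊢
    linarith [real_inner_comm x y, real_inner_comm u v, real_inner_comm x u,
      norm_add_sq_real x u]
  have hmem : -x ∈ A (-u) := hA.mem_of_forall_inner_nonneg fun y v hv =>
    (sq_nonneg _).trans (hoptimal y v hv)
  have hsum : x + u = 0 := by simpa using hoptimal _ _ hmem
  exact ⟨x, by rwa [← eq_neg_of_add_eq_zero_left hsum] at hmem⟩

lemma IsMaximallyMonotone.exists_sub_mem [CompleteSpace H] (hA : IsMaximallyMonotone A) (x : H) :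
    ∃ p, x - p ∈ A p := by
  obtain ⟨p, hp⟩ := (hA.comp_add_right x).exists_neg_mem
  exact ⟨p + x, by simpa using hp⟩

lemma IsMaximallyMonotone.sub_resolvent_mem [CompleteSpace H] (hA : IsMaximallyMonotone A)
    (x : H) : x - resolvent A x ∈ A (resolvent A x) := by
  have hinv : ∀ p, p ∈ inv (fun q => {q} + A q) x ↔ x - p ∈ A p := fun p => by
    simp [inv, sub_eq_neg_add]
  obtain ⟨p, hp⟩ := hA.exists_sub_mem x
  exact (hinv _).1 (Classical.epsilon_spec ⟨p, (hinv p).2 hp⟩)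

lemma IsMaximallyMonotone.inv_smul_sub_resolvent_mem [CompleteSpace H]
    (hA : IsMaximallyMonotone A) {γ : ℝ} (hγ : 0 < γ) (x : H) :
    γ⁻¹ • (x - resolvent (γ • A) x) ∈ A (resolvent (γ • A) x) :=
  (Set.mem_smul_set_iff_inv_smul_mem₀ hγ.ne' _ _).1 ((hA.smul hγ).sub_resolvent_mem x)

lemma norm_le_norm_add_of_inner_nonneg {a b : H} (h : 0 ≤ ⟪a, b⟫) : ‖a‖ ≤ ‖a + b‖ := by
  refine (sq_le_sq₀ (norm_nonneg _) (norm_nonneg _)).1 ?_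
  rw [norm_add_sq_real]
  linarith [sq_nonneg ‖b‖]

lemma norm_le_norm_add_smul_of_inner_nonneg {a b : H} (h : 0 ≤ ⟪a, b⟫) {γ : ℝ} (hγ : 0 ≤ γ) :
    ‖a‖ ≤ ‖a + γ • b‖ :=
  norm_le_norm_add_of_inner_nonneg (by simpa [real_inner_smul_right] using mul_nonneg hγ h)

lemma mul_norm_le_norm_add_smul_of_inner_nonneg {a b : H} (h : 0 ≤ ⟪a, b⟫) {γ : ℝ}
    (hγ : 0 ≤ γ) : γ * ‖b‖ ≤ ‖a + γ • b‖ := by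
  rw [← Real.norm_of_nonneg hγ, ← norm_smul, Real.norm_of_nonneg hγ, add_comm]
  refine norm_le_norm_add_of_inner_nonneg ?_
  rw [real_inner_smul_left, real_inner_comm]
  exact mul_nonneg hγ h

lemma IsMonotone.norm_sub_le_norm_add_smul_sub (hA : IsMonotone A) {γ : ℝ} {x u y v : H}
    (hu : u ∈ A x) (hv : v ∈ A y) (hγ : 0 ≤ γ) : ‖x - y‖ ≤ ‖x + γ • u - (y + γ • v)‖ := by
  rw [add_sub_add_comm, ← smul_sub]
  exact norm_le_norm_add_smul_of_inner_nonneg (hA hu hv) hγ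

lemma IsMonotone.mul_norm_sub_le_norm_add_smul_sub (hA : IsMonotone A) {γ : ℝ} {x u y v : H}
    (hu : u ∈ A x) (hv : v ∈ A y) (hγ : 0 ≤ γ) : γ * ‖u - v‖ ≤ ‖x + γ • u - (y + γ • v)‖ := by
  rw [add_sub_add_comm, ← smul_sub]
  exact mul_norm_le_norm_add_smul_of_inner_nonneg (hA hu hv) hγ

lemma IsMaximallyMonotone.resolvent_smul_add_smul [CompleteSpace H] (hA : IsMaximallyMonotone A)
    {γ : ℝ} (hγ : 0 < γ) {p u : H} (hu : u ∈ A p) : resolvent (γ • A) (p + γ • u) = p := by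
  have h := hA.1.norm_sub_le_norm_add_smul_sub
    (hA.inv_smul_sub_resolvent_mem hγ (p + γ • u)) hu hγ.le
  rwa [smul_inv_smul₀ hγ.ne', add_sub_cancel, sub_self, norm_zero, norm_le_zero_iff,
    sub_eq_zero] at h

end Resolvent

section Solutions

variable {H : Type*} [NormedAddCommGroup H] {A A₁ A₂ : H → Set H}

/-- A pair of a primal and a dual solution that certify each other: in Attouch–Théra duality, `p` is
a primal solution exactly when some `u` completes it to such a pair, and symmetrically for `u`. -/
def IsPrimalDualPair (A₁ A₂ : H → Set H) (p u : H) : Prop := u ∈ A₁ p ∧ -u ∈ A₂ p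

/-- Every primal solution is paired with every dual solution, that is, the set of primal-dual pairs
is the product of the primal and the dual solution sets. -/
def HasProductSolutions (A₁ A₂ : H → Set H) : Prop :=
  ∀ p ∈ primalSol A₁ A₂, ∀ u ∈ dualSol A₁ A₂, IsPrimalDualPair A₁ A₂ p u

lemma mem_primalSol_iff {p : H} : p ∈ primalSol A₁ A₂ ↔ ∃ u, IsPrimalDualPair A₁ A₂ p u := by
  simp only [primalSol, zer, Set.mem_ofPred_eq, Pi.add_apply, Set.mem_add]
  constructor
  · rintro ⟨u, hu, v, hv, huv⟩
    exact ⟨u, hu, by rwa [← eq_neg_of_add_eq_zero_right huv]⟩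
  · rintro ⟨u, hu, hv⟩
    exact ⟨u, hu, -u, hv, add_neg_cancel u⟩

lemma mem_dualSol_iff {u : H} : u ∈ dualSol A₁ A₂ ↔ ∃ p, IsPrimalDualPair A₁ A₂ p u := by
  simp only [dualSol, zer, Set.mem_ofPred_eq, Pi.sub_apply, Set.mem_sub, inv]
  constructor
  · rintro ⟨p, hp, q, hq, hpq⟩
    obtain rfl := sub_eq_zero.1 hpq
    exact ⟨p, hp, hq⟩
  · rintro ⟨p, hp, hq⟩
    exact ⟨p, hp, p, hq, sub_self p⟩

lemma IsProj.norm_sub_le {X : Set H} {y p q : H} (h : IsProj X y p) (hq : q ∈ X) :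
    ‖p - q‖ ≤ 2 * ‖y - q‖ := by
  linarith [h.2 q hq, norm_sub_le_norm_sub_add_norm_sub p y q, norm_sub_rev p y]

variable [InnerProductSpace ℝ H]

lemma IsParamonotone.hasProductSolutions (h₁ : IsParamonotone A₁) (h₂ : IsParamonotone A₂) :
    HasProductSolutions A₁ A₂ := by
  intro p hp u hu
  obtain ⟨v, hv₁, hv₂⟩ := mem_primalSol_iff.1 hp
  obtain ⟨q, hq₁, hq₂⟩ := mem_dualSol_iff.1 hu
  have hnonneg₁ : 0 ≤ ⟪p - q, v - u⟫ := h₁.1 hv₁ hq₁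
  have hnonneg₂ : 0 ≤ ⟪p - q, -v - -u⟫ := h₂.1 hv₂ hq₂
  have hopposite : ⟪p - q, -v - -u⟫ = -⟪p - q, v - u⟫ := by
    rw [← inner_neg_right, neg_sub, neg_sub_neg]
  exact ⟨(h₁.2 hv₁ hq₁ (by linarith)).1, (h₂.2 hv₂ hq₂ (by linarith)).1⟩

lemma IsPrimalDualPair.add_smul_mem_fixedPoints_drOp [CompleteSpace H]
    (hA₁ : IsMaximallyMonotone A₁) (hA₂ : IsMaximallyMonotone A₂) {p u : H}
    (h : IsPrimalDualPair A₁ A₂ p u) {γ : ℝ} (hγ : 0 < γ) :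
    p + γ • u ∈ Function.fixedPoints (drOp A₁ A₂ γ) := by
  have hreflect : (2 : ℝ) • p - (p + γ • u) = p + γ • -u := by module
  rw [Function.mem_fixedPoints_iff, drOp, hA₁.resolvent_smul_add_smul hγ h.1, hreflect,
    hA₂.resolvent_smul_add_smul hγ h.2, sub_add_cancel]

lemma exists_isProj [CompleteSpace H] {X : Set H} (hne : X.Nonempty) (hclosed : IsClosed X)
    (hconv : Convex ℝ X) (y : H) : ∃ p, IsProj X y p := by
  obtain ⟨p, hp, h⟩ := exists_norm_eq_iInf_of_complete_convex hne hclosed.isComplete hconv y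
  refine ⟨p, hp, fun q hq => ?_⟩
  rw [h]
  exact ciInf_le ⟨0, by rintro _ ⟨q, rfl⟩; exact norm_nonneg _⟩ (⟨q, hq⟩ : X)

lemma IsStronglyMonotoneRel.exists_le_inner [CompleteSpace H] {X : Set H} {μ : ℝ}
    (hA : IsStronglyMonotoneRel A μ X) {y v z : H} {t : ℝ} (hv : v ∈ A y) (ht : ‖z - y‖ ≤ t) :
    ∃ p ∈ X, ∃ m, ‖z - p‖ ≤ m + t ∧ (∀ q ∈ X, ‖p - q‖ ≤ 2 * (‖z - q‖ + t)) ∧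
      ∀ u ∈ A p, μ * m ^ 2 ≤ ⟪y - p, v - u⟫ := by
  obtain ⟨p, hp⟩ := exists_isProj hA.nonempty hA.closed hA.convex y
  refine ⟨p, hp.1, ‖y - p‖, ?_, fun q hq => ?_, fun u hu => ?_⟩
  · linarith [norm_sub_le_norm_sub_add_norm_sub z y p]
  · linarith [hp.norm_sub_le hq, norm_sub_le_norm_sub_add_norm_sub y z q, norm_sub_rev y z]
  · rw [real_inner_comm]
    exact hA.le_inner hv hp hu

end Solutions

section Contraction

variable {H : Type*} [NormedAddCommGroup H] [InnerProductSpace ℝ H] {A₁ A₂ : H → Set H}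
  {γ μ ρ : ℝ} {z g y h p u : H}

/-- One step of the Douglas–Rachford iteration, in terms of the graphs: the step maps `z + γ • g`
to `y + γ • g`, where `(z, g)` and `(y, h)` are the points of the graphs of `A₁` and `A₂` visited by
the two resolvents. -/
structure IsDouglasRachfordStep (A₁ A₂ : H → Set H) (γ : ℝ) (z g y h : H) : Prop where
  mem₁ : g ∈ A₁ z
  mem₂ : h ∈ A₂ y
  smul_add : γ • (g + h) = z - y

/-- The sum of the monotonicity products of `(z, g)` against `(p, u)` and of `(y, h)` against
`(p, -u)`; it measures the progress of a Douglas–Rachford step towards `p + γ • u`. -/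
def fejerGap (z g y h p u : H) : ℝ := ⟪z - p, g - u⟫ + ⟪y - p, h + u⟫

lemma fejerGap_eq_sub_sub (z g y h p u p₀ u₀ : H) :
    fejerGap z g y h p u = fejerGap z g y h p₀ u₀ - ⟪p - p₀, g + h⟫ - ⟪z - y, u - u₀⟫ := by
  simp only [fejerGap, inner_sub_left, inner_sub_right, inner_add_right]
  ring

lemma inner_le_fejerGap_left (hA₂ : IsMonotone A₂) (hh : h ∈ A₂ y)
    (hpu : IsPrimalDualPair A₁ A₂ p u) : ⟪z - p, g - u⟫ ≤ fejerGap z g y h p u := by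
  have := hA₂ hh hpu.2
  rw [sub_neg_eq_add] at this
  simpa [fejerGap] using this

lemma inner_le_fejerGap_right (hA₁ : IsMonotone A₁) (hg : g ∈ A₁ z)
    (hpu : IsPrimalDualPair A₁ A₂ p u) : ⟪y - p, h + u⟫ ≤ fejerGap z g y h p u := by
  simpa [fejerGap] using hA₁ hg hpu.1

namespace IsDouglasRachfordStep

lemma norm_sub_sq_eq (hs : IsDouglasRachfordStep A₁ A₂ γ z g y h) (p u : H) :
    ‖y + γ • g - (p + γ • u)‖ ^ 2 =
      ‖z + γ • g - (p + γ • u)‖ ^ 2 - ‖z - y‖ ^ 2 - 2 * γ * fejerGap z g y h p u := by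
  have hnew : y + γ • g - (p + γ • u) = z + γ • g - (p + γ • u) - (z - y) := by module
  have hgap : γ * fejerGap z g y h p u = ⟪z + γ • g - (p + γ • u) - (z - y), z - y⟫ := by
    have hright : γ • (h + u) = z - y - γ • (g - u) := by rw [← hs.smul_add]; module
    have hinner : z + γ • g - (p + γ • u) - (z - y) = (y - p) + γ • (g - u) := by module
    rw [fejerGap, mul_add, ← real_inner_smul_right _ _ γ, ← real_inner_smul_right _ _ γ, hright,
      hinner, inner_sub_right, inner_add_left, ← sub_sub_sub_cancel_right z y p]
    simp only [inner_sub_left, real_inner_comm (γ • (g - u)), inner_sub_right]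
    ring
  rw [hnew, norm_sub_sq_real]
  rw [inner_sub_left, real_inner_self_eq_norm_sq] at hgap
  linarith

lemma fejerGap_nonneg (hs : IsDouglasRachfordStep A₁ A₂ γ z g y h) (hA₁ : IsMonotone A₁)
    (hA₂ : IsMonotone A₂) (hpu : IsPrimalDualPair A₁ A₂ p u) : 0 ≤ fejerGap z g y h p u :=
  (hA₁ hs.mem₁ hpu.1).trans (inner_le_fejerGap_left hA₂ hs.mem₂ hpu)

lemma norm_sub_sq_add_le (hs : IsDouglasRachfordStep A₁ A₂ γ z g y h) (hA₁ : IsMonotone A₁)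
    (hA₂ : IsMonotone A₂) (hγ : 0 ≤ γ) (hpu : IsPrimalDualPair A₁ A₂ p u) :
    ‖y + γ • g - (p + γ • u)‖ ^ 2 + ‖z - y‖ ^ 2 ≤ ‖z + γ • g - (p + γ • u)‖ ^ 2 := by
  linarith [hs.norm_sub_sq_eq p u, mul_nonneg hγ (hs.fejerGap_nonneg hA₁ hA₂ hpu)]

lemma norm_next_sub_le (hs : IsDouglasRachfordStep A₁ A₂ γ z g y h) (hA₁ : IsMonotone A₁)
    (hA₂ : IsMonotone A₂) (hγ : 0 ≤ γ) (hpu : IsPrimalDualPair A₁ A₂ p u) :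
    ‖y + γ • g - (p + γ • u)‖ ≤ ‖z + γ • g - (p + γ • u)‖ :=
  le_of_sq_le_sq (by linarith [hs.norm_sub_sq_add_le hA₁ hA₂ hγ hpu, sq_nonneg ‖z - y‖])
    (norm_nonneg _)

lemma norm_sub_le (hs : IsDouglasRachfordStep A₁ A₂ γ z g y h) (hA₁ : IsMonotone A₁)
    (hA₂ : IsMonotone A₂) (hγ : 0 ≤ γ) (hpu : IsPrimalDualPair A₁ A₂ p u) :
    ‖z - y‖ ≤ ‖z + γ • g - (p + γ • u)‖ :=
  le_of_sq_le_sq (by nlinarith [hs.norm_sub_sq_add_le hA₁ hA₂ hγ hpu]) (norm_nonneg _)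

lemma exists_primal_estimate [CompleteSpace H] (hs : IsDouglasRachfordStep A₁ A₂ γ z g y h)
    (hA₁ : IsMonotone A₁) (hA₂ : IsMonotone A₂) (hsol : HasProductSolutions A₁ A₂)
    (hμ : IsStronglyMonotoneRel A₁ μ (primalSol A₁ A₂) ∨
      IsStronglyMonotoneRel A₂ μ (primalSol A₁ A₂)) :
    ∃ p ∈ primalSol A₁ A₂, ∃ m, ‖z - p‖ ≤ m + ‖z - y‖ ∧
      (∀ q ∈ primalSol A₁ A₂, ‖p - q‖ ≤ 2 * (‖z - q‖ + ‖z - y‖)) ∧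
      ∀ u ∈ dualSol A₁ A₂, μ * m ^ 2 ≤ fejerGap z g y h p u := by
  rcases hμ with hμ | hμ
  · obtain ⟨p, hp, m, hm, hq, hgap⟩ := hμ.exists_le_inner (z := z) (t := ‖z - y‖) hs.mem₁ (by simp)
    exact ⟨p, hp, m, hm, hq, fun u hu => (hgap u (hsol p hp u hu).1).trans
      (inner_le_fejerGap_left hA₂ hs.mem₂ (hsol p hp u hu))⟩
  · obtain ⟨p, hp, m, hm, hq, hgap⟩ := hμ.exists_le_inner hs.mem₂ (le_refl ‖z - y‖)
    refine ⟨p, hp, m, hm, hq, fun u hu => (hgap (-u) (hsol p hp u hu).2).trans ?_⟩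
    rw [sub_neg_eq_add]
    exact inner_le_fejerGap_right hA₁ hs.mem₁ (hsol p hp u hu)

lemma exists_dual_estimate [CompleteSpace H] (hs : IsDouglasRachfordStep A₁ A₂ γ z g y h)
    (hA₁ : IsMonotone A₁) (hA₂ : IsMonotone A₂) (hsol : HasProductSolutions A₁ A₂)
    (hρ : IsStronglyMonotoneRel (inv A₁) ρ (dualSol A₁ A₂) ∨
      IsStronglyMonotoneRel (inv A₂) ρ (-dualSol A₁ A₂)) :
    ∃ u ∈ dualSol A₁ A₂, ∃ l, ‖g - u‖ ≤ l + ‖g + h‖ ∧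
      (∀ v ∈ dualSol A₁ A₂, ‖u - v‖ ≤ 2 * (‖g - v‖ + ‖g + h‖)) ∧
      ∀ p ∈ primalSol A₁ A₂, ρ * l ^ 2 ≤ fejerGap z g y h p u := by
  rcases hρ with hρ | hρ
  · obtain ⟨u, hu, l, hl, hv, hgap⟩ :=
      hρ.exists_le_inner (A := inv A₁) (z := g) (t := ‖g + h‖) hs.mem₁ (by simp)
    refine ⟨u, hu, l, hl, hv, fun p hp => (hgap p (hsol p hp u hu).1).trans ?_⟩
    rw [real_inner_comm]
    exact inner_le_fejerGap_left hA₂ hs.mem₂ (hsol p hp u hu)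
  · have hneg : ‖-g - h‖ ≤ ‖g + h‖ := by rw [← neg_add', norm_neg]
    obtain ⟨v, hv, l, hl, hq, hgap⟩ := hρ.exists_le_inner (A := inv A₂) hs.mem₂ hneg
    obtain ⟨u, rfl⟩ : ∃ u, v = -u := ⟨-v, (neg_neg v).symm⟩
    rw [Set.neg_mem_neg] at hv
    refine ⟨u, hv, l, ?_, fun q hq' => ?_, fun p hp => (hgap p (hsol p hp u hv).2).trans ?_⟩
    · rwa [neg_sub_neg, norm_sub_rev] at hl
    · simpa only [neg_sub_neg, norm_sub_rev q] using hq (-q) (Set.neg_mem_neg.2 hq')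
    · rw [real_inner_comm, sub_neg_eq_add]
      exact inner_le_fejerGap_right hA₁ hs.mem₁ (hsol p hp u hv)

end IsDouglasRachfordStep

end Contraction

section LinearRate

variable {H : Type*} [NormedAddCommGroup H] [InnerProductSpace ℝ H] {A₁ A₂ : H → Set H}
  {γ μ ρ c : ℝ} {z g y h p u p₀ u₀ : H}

lemma sq_add_mul_sq_le_mul_mul {m l G : ℝ} (hγ : 0 < γ) (hμ : 0 < μ) (hρ : 0 < ρ)
    (hm : μ * m ^ 2 ≤ G) (hl : ρ * l ^ 2 ≤ G) (hc : 1 / (γ * μ) + γ / ρ ≤ c) :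
    m ^ 2 + (γ * l) ^ 2 ≤ c * (γ * G) := by
  have hG : 0 ≤ G := (mul_nonneg hμ.le (sq_nonneg m)).trans hm
  calc m ^ 2 + (γ * l) ^ 2 ≤ G / μ + γ ^ 2 * (G / ρ) := by
        rw [mul_pow]
        gcongr
        · exact (le_div_iff₀' hμ).2 hm
        · exact (le_div_iff₀' hρ).2 hl
    _ = (1 / (γ * μ) + γ / ρ) * (γ * G) := by field_simp
    _ ≤ c * (γ * G) := by gcongr

lemma sq_le_div_eight_add_mul {E e t m k G G₀ : ℝ} (hc : 0 ≤ c) (hE : 0 ≤ E)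
    (hEle : E ≤ m + k + 2 * t) (hmk : m ^ 2 + k ^ 2 ≤ c * G) (hG : G ≤ G₀ + 8 * e * t)
    (hG₀ : 0 ≤ G₀) :
    E ^ 2 ≤ e ^ 2 / 8 + (1152 * c ^ 2 + 3 * c / 2 + 12) * (t ^ 2 + 2 * G₀) := calc
  E ^ 2 ≤ (m + k + 2 * t) ^ 2 := pow_le_pow_left₀ hE hEle 2
  _ ≤ 3 * (m ^ 2 + k ^ 2) + 12 * t ^ 2 := by
    nlinarith [sq_nonneg (m - k), sq_nonneg (m - 2 * t), sq_nonneg (k - 2 * t)]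
  _ ≤ 3 * (c * (G₀ + 8 * e * t)) + 12 * t ^ 2 := by
    gcongr
    exact hmk.trans (mul_le_mul_of_nonneg_left hG hc)
  -- Young's inequality `24 c e t ≤ e² / 8 + 1152 c² t²`; only a small share of `e²` is affordable.
  _ ≤ e ^ 2 / 8 + 1152 * c ^ 2 * t ^ 2 + 3 * c * G₀ + 12 * t ^ 2 := by
    nlinarith [sq_nonneg (e - 96 * c * t)]
  _ ≤ e ^ 2 / 8 + (1152 * c ^ 2 + 3 * c / 2 + 12) * (t ^ 2 + 2 * G₀) := by
    nlinarith [mul_nonneg hc (sq_nonneg t), mul_nonneg (sq_nonneg c) hG₀]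

lemma le_sqrt_mul_of_lt_of_sq_le {E e f M : ℝ} (hM : 0 < M) (he : 0 ≤ e) (hlt : e / 2 < E)
    (hE : E ^ 2 ≤ e ^ 2 / 8 + M * (e ^ 2 - f ^ 2)) : f ≤ √(1 - 1 / (8 * M)) * e := by
  have hsq : f ^ 2 ≤ (1 - 1 / (8 * M)) * e ^ 2 := by
    have hfrac : e ^ 2 / (8 * M) ≤ e ^ 2 - f ^ 2 := by
      rw [div_le_iff₀ (by positivity)]
      nlinarith
    linear_combination hfrac
  calc f ≤ √((1 - 1 / (8 * M)) * e ^ 2) := Real.le_sqrt_of_sq_le hsq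
    _ = √(1 - 1 / (8 * M)) * e := by rw [Real.sqrt_mul' _ (sq_nonneg e), Real.sqrt_sq he]

lemma infDist_le_mul_infDist {E : Type*} [PseudoMetricSpace E] {s t : Set E} {x y : E} {κ : ℝ}
    (ht : t.Nonempty) (hκ : 0 ≤ κ) (h : ∀ q ∈ t, ∃ p ∈ s, dist x p ≤ κ * dist y q) :
    infDist x s ≤ κ * infDist y t := by
  have := ht.to_subtype
  rw [infDist_eq_iInf (s := t), Real.mul_iInf_of_nonneg hκ]
  refine le_ciInf fun q => ?_
  obtain ⟨p, hp, hpq⟩ := h q q.2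
  exact (infDist_le_dist_of_mem hp).trans hpq

namespace IsDouglasRachfordStep

lemma mul_norm_add_eq (hs : IsDouglasRachfordStep A₁ A₂ γ z g y h) (hγ : 0 ≤ γ) :
    γ * ‖g + h‖ = ‖z - y‖ := by
  rw [← hs.smul_add, norm_smul, Real.norm_of_nonneg hγ]

lemma mul_fejerGap_le (hs : IsDouglasRachfordStep A₁ A₂ γ z g y h) (hA₁ : IsMonotone A₁)
    (hA₂ : IsMonotone A₂) (hγ : 0 ≤ γ) (hpu₀ : IsPrimalDualPair A₁ A₂ p₀ u₀)
    (hp : ‖p - p₀‖ ≤ 2 * (‖z - p₀‖ + ‖z - y‖)) (hu : ‖u - u₀‖ ≤ 2 * (‖g - u₀‖ + ‖g + h‖)) :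
    γ * fejerGap z g y h p u ≤ γ * fejerGap z g y h p₀ u₀
      + 8 * ‖z + γ • g - (p₀ + γ • u₀)‖ * ‖z - y‖ := by
  have hz := hA₁.norm_sub_le_norm_add_smul_sub hs.mem₁ hpu₀.1 hγ
  have hg := hA₁.mul_norm_sub_le_norm_add_smul_sub hs.mem₁ hpu₀.1 hγ
  have hzy := hs.norm_sub_le hA₁ hA₂ hγ hpu₀
  have hgh := hs.mul_norm_add_eq hγ
  set e := ‖z + γ • g - (p₀ + γ • u₀)‖
  have hprimal : γ * -⟪p - p₀, g + h⟫ ≤ 4 * e * ‖z - y‖ := calc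
    γ * -⟪p - p₀, g + h⟫ ≤ γ * (‖p - p₀‖ * ‖g + h‖) := by
      gcongr
      exact (neg_le_abs _).trans (abs_real_inner_le_norm _ _)
    _ = ‖p - p₀‖ * ‖z - y‖ := by rw [← hgh]; ring
    _ ≤ 4 * e * ‖z - y‖ := by gcongr; linarith
  have hdual : γ * -⟪z - y, u - u₀⟫ ≤ 4 * e * ‖z - y‖ := calc
    γ * -⟪z - y, u - u₀⟫ ≤ γ * (‖z - y‖ * ‖u - u₀‖) := by
      gcongr
      exact (neg_le_abs _).trans (abs_real_inner_le_norm _ _)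
    _ = γ * ‖u - u₀‖ * ‖z - y‖ := by ring
    _ ≤ 4 * e * ‖z - y‖ := mul_le_mul_of_nonneg_right
      (by linarith [mul_le_mul_of_nonneg_left hu hγ]) (norm_nonneg _)
  rw [fejerGap_eq_sub_sub z g y h p u p₀ u₀]
  linarith

lemma norm_sub_le_add (hs : IsDouglasRachfordStep A₁ A₂ γ z g y h) (hγ : 0 ≤ γ) {m l : ℝ}
    (hm : ‖z - p‖ ≤ m + ‖z - y‖) (hl : ‖g - u‖ ≤ l + ‖g + h‖) :
    ‖z + γ • g - (p + γ • u)‖ ≤ m + γ * l + 2 * ‖z - y‖ := calc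
  ‖z + γ • g - (p + γ • u)‖ ≤ ‖z - p‖ + γ * ‖g - u‖ := by
    rw [add_sub_add_comm, ← smul_sub]
    simpa only [norm_smul, Real.norm_of_nonneg hγ] using norm_add_le (z - p) (γ • (g - u))
  _ ≤ m + γ * l + 2 * ‖z - y‖ := by
    linarith [mul_le_mul_of_nonneg_left hl hγ, hs.mul_norm_add_eq hγ]

lemma exists_norm_sub_sq_le [CompleteSpace H] (hs : IsDouglasRachfordStep A₁ A₂ γ z g y h)
    (hA₁ : IsMonotone A₁) (hA₂ : IsMonotone A₂) (hsol : HasProductSolutions A₁ A₂)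
    (hμ : IsStronglyMonotoneRel A₁ μ (primalSol A₁ A₂) ∨
      IsStronglyMonotoneRel A₂ μ (primalSol A₁ A₂))
    (hρ : IsStronglyMonotoneRel (inv A₁) ρ (dualSol A₁ A₂) ∨
      IsStronglyMonotoneRel (inv A₂) ρ (-dualSol A₁ A₂))
    (hγ : 0 < γ) (hc : 1 / (γ * μ) + γ / ρ ≤ c)
    (hp₀ : p₀ ∈ primalSol A₁ A₂) (hu₀ : u₀ ∈ dualSol A₁ A₂) :
    ∃ p ∈ primalSol A₁ A₂, ∃ u ∈ dualSol A₁ A₂, ‖z + γ • g - (p + γ • u)‖ ^ 2 ≤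
      ‖z + γ • g - (p₀ + γ • u₀)‖ ^ 2 / 8 + (1152 * c ^ 2 + 3 * c / 2 + 12) *
        (‖z + γ • g - (p₀ + γ • u₀)‖ ^ 2 - ‖y + γ • g - (p₀ + γ • u₀)‖ ^ 2) := by
  have hμ₀ : 0 < μ := hμ.elim (·.pos) (·.pos)
  have hρ₀ : 0 < ρ := hρ.elim (·.pos) (·.pos)
  obtain ⟨p, hp, m, hzp, hpp₀, hm⟩ := hs.exists_primal_estimate hA₁ hA₂ hsol hμ
  obtain ⟨u, hu, l, hgu, huu₀, hl⟩ := hs.exists_dual_estimate hA₁ hA₂ hsol hρ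
  have hgap := hs.mul_fejerGap_le hA₁ hA₂ hγ.le (hsol p₀ hp₀ u₀ hu₀) (hpp₀ p₀ hp₀) (huu₀ u₀ hu₀)
  have hgap₀ : 0 ≤ γ * fejerGap z g y h p₀ u₀ :=
    mul_nonneg hγ.le (hs.fejerGap_nonneg hA₁ hA₂ (hsol p₀ hp₀ u₀ hu₀))
  have hprogress : ‖z + γ • g - (p₀ + γ • u₀)‖ ^ 2 - ‖y + γ • g - (p₀ + γ • u₀)‖ ^ 2 =
      ‖z - y‖ ^ 2 + 2 * (γ * fejerGap z g y h p₀ u₀) := by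
    linarith [hs.norm_sub_sq_eq p₀ u₀]
  refine ⟨p, hp, u, hu, hprogress ▸ sq_le_div_eight_add_mul ?_ (norm_nonneg _)
    (hs.norm_sub_le_add hγ.le hzp hgu)
    (sq_add_mul_sq_le_mul_mul hγ hμ₀ hρ₀ (hm u hu) (hl p hp) hc) hgap hgap₀⟩
  exact le_trans (by positivity) hc

lemma exists_norm_next_sub_le [CompleteSpace H] (hs : IsDouglasRachfordStep A₁ A₂ γ z g y h)
    (hA₁ : IsMonotone A₁) (hA₂ : IsMonotone A₂) (hsol : HasProductSolutions A₁ A₂)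
    (hμ : IsStronglyMonotoneRel A₁ μ (primalSol A₁ A₂) ∨
      IsStronglyMonotoneRel A₂ μ (primalSol A₁ A₂))
    (hρ : IsStronglyMonotoneRel (inv A₁) ρ (dualSol A₁ A₂) ∨
      IsStronglyMonotoneRel (inv A₂) ρ (-dualSol A₁ A₂))
    (hγ : 0 < γ) (hc : 1 / (γ * μ) + γ / ρ ≤ c)
    (hp₀ : p₀ ∈ primalSol A₁ A₂) (hu₀ : u₀ ∈ dualSol A₁ A₂) :
    ∃ p ∈ primalSol A₁ A₂, ∃ u ∈ dualSol A₁ A₂, ‖y + γ • g - (p + γ • u)‖ ≤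
      √(1 - 1 / (8 * (1152 * c ^ 2 + 3 * c / 2 + 12))) * ‖z + γ • g - (p₀ + γ • u₀)‖ := by
  obtain ⟨p, hp, u, hu, hbound⟩ := hs.exists_norm_sub_sq_le hA₁ hA₂ hsol hμ hρ hγ hc hp₀ hu₀
  have hμ₀ : 0 < μ := hμ.elim (·.pos) (·.pos)
  have hρ₀ : 0 < ρ := hρ.elim (·.pos) (·.pos)
  have hc₀ : 0 ≤ c := le_trans (by positivity) hc
  set M := 1152 * c ^ 2 + 3 * c / 2 + 12
  have hM : 12 ≤ M := le_add_of_nonneg_left (by positivity)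
  rcases le_or_gt ‖z + γ • g - (p + γ • u)‖ (‖z + γ • g - (p₀ + γ • u₀)‖ / 2) with hle | hlt
  · have hhalf : 1 / 2 ≤ √(1 - 1 / (8 * M)) := by
      have : 1 / (8 * M) ≤ 1 / (8 * 12) := by gcongr
      exact Real.le_sqrt_of_sq_le (by linarith)
    refine ⟨p, hp, u, hu, ?_⟩
    calc ‖y + γ • g - (p + γ • u)‖
      _ ≤ ‖z + γ • g - (p + γ • u)‖ := hs.norm_next_sub_le hA₁ hA₂ hγ.le (hsol p hp u hu)
      _ ≤ 1 / 2 * ‖z + γ • g - (p₀ + γ • u₀)‖ := by linarith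
      _ ≤ √(1 - 1 / (8 * M)) * ‖z + γ • g - (p₀ + γ • u₀)‖ := by gcongr
  · exact ⟨p₀, hp₀, u₀, hu₀, le_sqrt_mul_of_lt_of_sq_le (by linarith) (norm_nonneg _) hlt hbound⟩

lemma norm_sub_le_infDist (hs : IsDouglasRachfordStep A₁ A₂ γ z g y h) (hA₁ : IsMonotone A₁)
    (hA₂ : IsMonotone A₂) (hsol : HasProductSolutions A₁ A₂) (hγ : 0 ≤ γ)
    (hP : (primalSol A₁ A₂).Nonempty) (hD : (dualSol A₁ A₂).Nonempty) :
    ‖z - y‖ ≤ infDist (z + γ • g) (primalSol A₁ A₂ + γ • dualSol A₁ A₂) := by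
  refine (le_infDist (hP.add hD.smul_set)).2 ?_
  rintro _ ⟨p, hp, _, ⟨u, hu, rfl⟩, rfl⟩
  rw [dist_eq_norm]
  exact hs.norm_sub_le hA₁ hA₂ hγ (hsol p hp u hu)

end IsDouglasRachfordStep

lemma exists_infDist_le_mul_infDist [CompleteSpace H]
    (hA₁ : IsMonotone A₁) (hA₂ : IsMonotone A₂) (hsol : HasProductSolutions A₁ A₂)
    (hμ : IsStronglyMonotoneRel A₁ μ (primalSol A₁ A₂) ∨
      IsStronglyMonotoneRel A₂ μ (primalSol A₁ A₂))
    (hρ : IsStronglyMonotoneRel (inv A₁) ρ (dualSol A₁ A₂) ∨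
      IsStronglyMonotoneRel (inv A₂) ρ (-dualSol A₁ A₂))
    {a b : ℝ} (ha : 0 < a) :
    ∃ κ ∈ Set.Ico (0 : ℝ) 1, ∀ γ ∈ Set.Icc a b, ∀ z g y h, IsDouglasRachfordStep A₁ A₂ γ z g y h →
      infDist (y + γ • g) (primalSol A₁ A₂ + γ • dualSol A₁ A₂) ≤
        κ * infDist (z + γ • g) (primalSol A₁ A₂ + γ • dualSol A₁ A₂) := by
  have hμ₀ : 0 < μ := hμ.elim (·.pos) (·.pos)
  have hρ₀ : 0 < ρ := hρ.elim (·.pos) (·.pos)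
  have hP : (primalSol A₁ A₂).Nonempty := hμ.elim (·.nonempty) (·.nonempty)
  have hD : (dualSol A₁ A₂).Nonempty :=
    hρ.elim (·.nonempty) fun hρ => Set.nonempty_neg.1 hρ.nonempty
  set c := 1 / (a * μ) + |b| / ρ with hcdef
  have : 0 ≤ c := by positivity
  refine ⟨√(1 - 1 / (8 * (1152 * c ^ 2 + 3 * c / 2 + 12))), ⟨Real.sqrt_nonneg _, ?_⟩,
    fun γ hγ z g y h hs => ?_⟩
  · rw [Real.sqrt_lt' one_pos, one_pow, sub_lt_self_iff]
    positivity
  · have hγ₀ : 0 < γ := ha.trans_le hγ.1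
    have hγc : 1 / (γ * μ) + γ / ρ ≤ c := by
      rw [hcdef]
      gcongr
      exacts [hγ.1, hγ.2.trans (le_abs_self b)]
    refine infDist_le_mul_infDist (hP.add hD.smul_set) (Real.sqrt_nonneg _) ?_
    rintro _ ⟨p₀, hp₀, _, ⟨u₀, hu₀, rfl⟩, rfl⟩
    obtain ⟨p, hp, u, hu, hle⟩ :=
      hs.exists_norm_next_sub_le hA₁ hA₂ hsol hμ hρ hγ₀ hγc hp₀ hu₀
    exact ⟨_, Set.add_mem_add hp (Set.smul_mem_smul_set hu), by simpa only [dist_eq_norm] using hle⟩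

lemma IsMonotone.infDist_add_smul_le (hA₁ : IsMonotone A₁) (hsol : HasProductSolutions A₁ A₂)
    (hP : (primalSol A₁ A₂).Nonempty) (hD : (dualSol A₁ A₂).Nonempty) (hg : g ∈ A₁ z)
    (hγ : 0 < γ) (γ' : ℝ) :
    infDist (z + γ' • g) (primalSol A₁ A₂ + γ' • dualSol A₁ A₂) ≤
      (1 + |γ' - γ| / γ) * infDist (z + γ • g) (primalSol A₁ A₂ + γ • dualSol A₁ A₂) := by
  refine infDist_le_mul_infDist (hP.add hD.smul_set) (by positivity) ?_
  rintro _ ⟨p, hp, _, ⟨u, hu, rfl⟩, rfl⟩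
  refine ⟨p + γ' • u, Set.add_mem_add hp (Set.smul_mem_smul_set hu), ?_⟩
  have hgu : ‖g - u‖ ≤ ‖z + γ • g - (p + γ • u)‖ / γ :=
    (le_div_iff₀' hγ).2 (hA₁.mul_norm_sub_le_norm_add_smul_sub hg (hsol p hp u hu).1 hγ.le)
  have hsplit : z + γ' • g - (p + γ' • u) = z + γ • g - (p + γ • u) + (γ' - γ) • (g - u) := by
    module
  simp only [dist_eq_norm]
  calc ‖z + γ' • g - (p + γ' • u)‖
    _ ≤ ‖z + γ • g - (p + γ • u)‖ + |γ' - γ| * ‖g - u‖ := by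
      rw [hsplit, ← Real.norm_eq_abs, ← norm_smul]
      exact norm_add_le _ _
    _ ≤ ‖z + γ • g - (p + γ • u)‖ + |γ' - γ| * (‖z + γ • g - (p + γ • u)‖ / γ) := by gcongr
    _ = (1 + |γ' - γ| / γ) * ‖z + γ • g - (p + γ • u)‖ := by ring

end LinearRate

section Iteration

variable {H : Type*} [NormedAddCommGroup H] [InnerProductSpace ℝ H] {A₁ A₂ : H → Set H}
  {μ ρ γs : ℝ} {γ : ℕ → ℝ} {z g y h : ℕ → H}

/-- A run of the Douglas–Rachford iteration with step sizes `γ`, in terms of the graphs. The result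
`y n + γ n • g n` of step `n` is split again with the old step size `γ n`, and the next step starts
at `z (n + 1) + γ (n + 1) • g (n + 1)`, which keeps the point of the graph of `A₁`. -/
structure IsDouglasRachfordSequence (A₁ A₂ : H → Set H) (γ : ℕ → ℝ) (z g y h : ℕ → H) : Prop where
  step : ∀ n, IsDouglasRachfordStep A₁ A₂ (γ n) (z n) (g n) (y n) (h n)
  link : ∀ n, z (n + 1) + γ n • g (n + 1) = y n + γ n • g n

lemma IsDouglasRachfordSequence.of_resolvent [CompleteSpace H] (hA₁ : IsMaximallyMonotone A₁)
    (hA₂ : IsMaximallyMonotone A₂) (hγ : ∀ n, 0 < γ n) {x w : ℕ → H}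
    (hz₀ : z 0 = resolvent (γ 0 • A₁) (x 0))
    (hy : ∀ n, y n = resolvent (γ n • A₂) ((2 : ℝ) • z n - x n))
    (hw : ∀ n, w n = x n - z n + y n)
    (hz : ∀ n, z (n + 1) = resolvent (γ n • A₁) (w n))
    (hx : ∀ n, x (n + 1) = (γ (n + 1) / γ n) • w n + (1 - γ (n + 1) / γ n) • z (n + 1)) :
    IsDouglasRachfordSequence A₁ A₂ γ z (fun n => (γ n)⁻¹ • (x n - z n)) y
      (fun n => (γ n)⁻¹ • ((2 : ℝ) • z n - x n - y n)) := by
  have hγ₀ : ∀ n, γ n ≠ 0 := fun n => (hγ n).ne'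
  have hsucc : ∀ n, (γ (n + 1))⁻¹ • (x (n + 1) - z (n + 1)) = (γ n)⁻¹ • (w n - z (n + 1)) := by
    intro n
    have hdiff : x (n + 1) - z (n + 1) = (γ (n + 1) / γ n) • (w n - z (n + 1)) := by
      rw [hx n]
      module
    rw [hdiff, smul_smul, inv_mul_eq_div, div_div_cancel_left' (hγ₀ (n + 1))]
  refine ⟨fun n => ⟨?_, ?_, ?_⟩, fun n => ?_⟩
  · cases n with
    | zero => simpa only [← hz₀] using hA₁.inv_smul_sub_resolvent_mem (hγ 0) (x 0)
    | succ n => simpa only [hsucc, ← hz] using hA₁.inv_smul_sub_resolvent_mem (hγ n) (w n)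
  · simpa only [← hy] using hA₂.inv_smul_sub_resolvent_mem (hγ n) ((2 : ℝ) • z n - x n)
  · rw [smul_add, smul_inv_smul₀ (hγ₀ n), smul_inv_smul₀ (hγ₀ n)]
    module
  · rw [hsucc, smul_inv_smul₀ (hγ₀ n), smul_inv_smul₀ (hγ₀ n), hw]
    abel

namespace IsDouglasRachfordSequence

lemma norm_succ_sub_le (hs : IsDouglasRachfordSequence A₁ A₂ γ z g y h) (hA₁ : IsMonotone A₁)
    (hγ : ∀ n, 0 ≤ γ n) (n : ℕ) : ‖z (n + 1) - z n‖ ≤ ‖z n - y n‖ := by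
  refine (hA₁.norm_sub_le_norm_add_smul_sub (hs.step (n + 1)).mem₁ (hs.step n).mem₁
    (hγ n)).trans_eq ?_
  rw [hs.link, add_sub_add_right_eq_sub, norm_sub_rev]

lemma mul_norm_succ_sub_le (hs : IsDouglasRachfordSequence A₁ A₂ γ z g y h) (hA₁ : IsMonotone A₁)
    (hγ : ∀ n, 0 ≤ γ n) (n : ℕ) : γ n * ‖g (n + 1) - g n‖ ≤ ‖z n - y n‖ := by
  refine (hA₁.mul_norm_sub_le_norm_add_smul_sub (hs.step (n + 1)).mem₁ (hs.step n).mem₁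
    (hγ n)).trans_eq ?_
  rw [hs.link, add_sub_add_right_eq_sub, norm_sub_rev]

lemma convergesRLinearly_sub [CompleteSpace H] (hs : IsDouglasRachfordSequence A₁ A₂ γ z g y h)
    (hA₁ : IsMonotone A₁) (hA₂ : IsMonotone A₂) (hsol : HasProductSolutions A₁ A₂)
    (hμ : IsStronglyMonotoneRel A₁ μ (primalSol A₁ A₂) ∨
      IsStronglyMonotoneRel A₂ μ (primalSol A₁ A₂))
    (hρ : IsStronglyMonotoneRel (inv A₁) ρ (dualSol A₁ A₂) ∨
      IsStronglyMonotoneRel (inv A₂) ρ (-dualSol A₁ A₂))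
    (hγ : ∀ n, 0 < γ n) (hγs : 0 < γs) (hlim : Tendsto γ atTop (𝓝 γs)) :
    ConvergesRLinearly (fun n => z n - y n) 0 := by
  have hP : (primalSol A₁ A₂).Nonempty := hμ.elim (·.nonempty) (·.nonempty)
  have hD : (dualSol A₁ A₂).Nonempty :=
    hρ.elim (·.nonempty) fun hρ => Set.nonempty_neg.1 hρ.nonempty
  obtain ⟨a, b, ha, hab⟩ := exists_Icc_of_tendsto_pos hlim hγ hγs
  obtain ⟨κ, hκ, hcontract⟩ := exists_infDist_le_mul_infDist hA₁ hA₂ hsol hμ hρ (b := b) ha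
  set d : ℕ → ℝ := fun n => infDist (z n + γ n • g n) (primalSol A₁ A₂ + γ n • dualSol A₁ A₂)
  have hd : ∀ n, d (n + 1) ≤ (1 + |γ (n + 1) - γ n| / γ n) * κ * d n := fun n => calc
    d (n + 1) ≤ (1 + |γ (n + 1) - γ n| / γ n) *
        infDist (y n + γ n • g n) (primalSol A₁ A₂ + γ n • dualSol A₁ A₂) := by
      rw [← hs.link n]
      exact hA₁.infDist_add_smul_le hsol hP hD (hs.step (n + 1)).mem₁ (hγ n) _
    _ ≤ (1 + |γ (n + 1) - γ n| / γ n) * (κ * d n) :=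
      mul_le_mul_of_nonneg_left (hcontract (γ n) (hab n) _ _ _ _ (hs.step n))
        (add_nonneg zero_le_one (div_nonneg (abs_nonneg _) (hγ n).le))
    _ = (1 + |γ (n + 1) - γ n| / γ n) * κ * d n := (mul_assoc _ _ _).symm
  have hrate : Tendsto (fun n => (1 + |γ (n + 1) - γ n| / γ n) * κ) atTop (𝓝 κ) := by
    have hdiff := (((hlim.comp (tendsto_add_atTop_nat 1)).sub hlim).abs.div hlim hγs.ne')
    simpa using (hdiff.const_add 1).mul_const κ
  have hdlim : ConvergesRLinearly d 0 :=
    convergesRLinearly_zero_of_succ_le_mul (fun _ => infDist_nonneg) hd hrate hκ.2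
  refine hdlim.of_isBigO (isBigO_of_le atTop fun n => ?_)
  rw [sub_zero, sub_zero, Real.norm_of_nonneg infDist_nonneg]
  exact (hs.step n).norm_sub_le_infDist hA₁ hA₂ hsol (hγ n).le hP hD

lemma exists_convergesRLinearly [CompleteSpace H] (hs : IsDouglasRachfordSequence A₁ A₂ γ z g y h)
    (hA₁ : IsMaximallyMonotone A₁) (hA₂ : IsMaximallyMonotone A₂) (hγ : ∀ n, 0 < γ n)
    (hγs : 0 < γs) (hlim : Tendsto γ atTop (𝓝 γs))
    (hzy : ConvergesRLinearly (fun n => z n - y n) 0) :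
    ∃ zs gs, IsPrimalDualPair A₁ A₂ zs gs ∧ ConvergesRLinearly z zs ∧ ConvergesRLinearly y zs ∧
      ConvergesRLinearly g gs := by
  have hγ₀ : ∀ n, 0 ≤ γ n := fun n => (hγ n).le
  obtain ⟨a, _, ha, hab⟩ := exists_Icc_of_tendsto_pos hlim hγ hγs
  obtain ⟨zs, hz⟩ : ∃ zs, ConvergesRLinearly z zs :=
    ConvergesRLinearly.exists_of_succ_sub (hzy.of_isBigO (isBigO_of_le atTop fun n => by
      simpa only [sub_zero] using hs.norm_succ_sub_le hA₁.1 hγ₀ n))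
  obtain ⟨gs, hg⟩ : ∃ gs, ConvergesRLinearly g gs := by
    refine ConvergesRLinearly.exists_of_succ_sub
      (hzy.of_isBigO (.of_bound a⁻¹ (.of_forall fun n => ?_)))
    rw [sub_zero, sub_zero, inv_mul_eq_div, le_div_iff₀' ha]
    exact (mul_le_mul_of_nonneg_right (hab n).1 (norm_nonneg _)).trans
      (hs.mul_norm_succ_sub_le hA₁.1 hγ₀ n)
  have hy : ConvergesRLinearly y zs := by simpa using hz.sub hzy
  have hh : Tendsto h atTop (𝓝 (-gs)) := by
    have hsub := ((hlim.inv₀ hγs.ne').smul hzy.tendsto).sub hg.tendsto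
    rw [smul_zero, zero_sub] at hsub
    refine hsub.congr fun n => ?_
    rw [← (hs.step n).smul_add, inv_smul_smul₀ (hγ n).ne', add_sub_cancel_left]
  exact ⟨zs, gs, ⟨hA₁.mem_of_tendsto (fun n => (hs.step n).mem₁) hz.tendsto hg.tendsto,
    hA₂.mem_of_tendsto (fun n => (hs.step n).mem₂) hy.tendsto hh⟩, hz, hy, hg⟩

end IsDouglasRachfordSequence

end Iteration

end MonOp

open MonOp in
theorem stmt12_general {H : Type*} [NormedAddCommGroup H] [InnerProductSpace ℝ H] [CompleteSpace H]
    (A₁ A₂ : H → Set H)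
    (hA₁ : IsMaximallyMonotone A₁) (hA₂ : IsMaximallyMonotone A₂)
    (hsol : HasProductSolutions A₁ A₂)
    (μ ρ : ℝ)
    (hμ : IsStronglyMonotoneRel A₁ μ (primalSol A₁ A₂) ∨
      IsStronglyMonotoneRel A₂ μ (primalSol A₁ A₂))
    (hρ : IsStronglyMonotoneRel (inv A₁) ρ (dualSol A₁ A₂) ∨
      IsStronglyMonotoneRel (inv A₂) ρ (-dualSol A₁ A₂))
    (γ : ℕ → ℝ) (hγ : ∀ n, 0 < γ n) (γs : ℝ) (hγs : 0 < γs) (hγlim : ConvergesRLinearly γ γs)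
    (x z y w : ℕ → H)
    (hz0 : z 0 = resolvent (γ 0 • A₁) (x 0))
    (hy : ∀ n, y n = resolvent (γ n • A₂) ((2 : ℝ) • z n - x n))
    (hw : ∀ n, w n = x n - z n + y n)
    (hz : ∀ n, z (n + 1) = resolvent (γ n • A₁) (w n))
    (hx : ∀ n, x (n + 1) = (γ (n + 1) / γ n) • w n + (1 - γ (n + 1) / γ n) • z (n + 1)) :
    ∃ xs zs gs : H,
      zs = resolvent (γs • A₁) xs ∧ gs = γs⁻¹ • (xs - zs) ∧
      (xs ∈ Function.fixedPoints (drOp A₁ A₂ γs) ∧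
        ConvergesRLinearly x xs ∧ ConvergesRLinearly w xs) ∧
      (zs ∈ primalSol A₁ A₂ ∧ ConvergesRLinearly z zs ∧ ConvergesRLinearly y zs) ∧
      (gs ∈ dualSol A₁ A₂ ∧
        ConvergesRLinearly (fun n => (γ n)⁻¹ • (x n - z n)) gs ∧
        ConvergesRLinearly (fun n => (γ n)⁻¹ • (w n - y n)) gs) := by
  have hseq := IsDouglasRachfordSequence.of_resolvent hA₁ hA₂ hγ hz0 hy hw hz hx
  have hzy := hseq.convergesRLinearly_sub hA₁.1 hA₂.1 hsol hμ hρ hγ hγs hγlim.tendsto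
  obtain ⟨zs, gs, hpair, hzlim, hylim, hglim⟩ :=
    hseq.exists_convergesRLinearly hA₁ hA₂ hγ hγs hγlim.tendsto hzy
  have hxz : ∀ n, γ n • (γ n)⁻¹ • (x n - z n) = x n - z n := fun n =>
    smul_inv_smul₀ (hγ n).ne' _
  have hxlim : ConvergesRLinearly x (zs + γs • gs) := by
    simpa only [hxz, add_sub_cancel] using hzlim.add (hγlim.smul hglim)
  have hwlim : ConvergesRLinearly w (zs + γs • gs) := by
    simpa only [hxz, add_comm (y _), ← hw] using hylim.add (hγlim.smul hglim)
  refine ⟨zs + γs • gs, zs, gs, (hA₁.resolvent_smul_add_smul hγs hpair.1).symm, ?_,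
    ⟨hpair.add_smul_mem_fixedPoints_drOp hA₁ hA₂ hγs, hxlim, hwlim⟩,
    ⟨mem_primalSol_iff.2 ⟨gs, hpair⟩, hzlim, hylim⟩,
    ⟨mem_dualSol_iff.2 ⟨zs, hpair⟩, hglim, ?_⟩⟩
  · rw [add_sub_cancel_left, inv_smul_smul₀ hγs.ne']
  · simpa only [hw, add_sub_cancel_right] using hglim

theorem stmt12 {H : Type*} [NormedAddCommGroup H] [InnerProductSpace ℝ H] [CompleteSpace H]
    (Γ : Set ℝ) (hΓne : Γ.Nonempty) (hΓclosed : IsClosed Γ) (hΓint : Γ.OrdConnected)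
    (hΓpos : Γ ⊆ Set.Ioi 0)
    (A₁ A₂ : H → Set H)
    (hA₁ : MonOp.IsMaximallyMonotone A₁) (hA₂ : MonOp.IsMaximallyMonotone A₂)
    (hA₁p : MonOp.IsParamonotone A₁) (hA₂p : MonOp.IsParamonotone A₂)
    (hP : (MonOp.primalSol A₁ A₂).Nonempty)
    (μ ρ : ℝ)
    (hμ : MonOp.IsStronglyMonotoneRel A₁ μ (MonOp.primalSol A₁ A₂) ∨
      MonOp.IsStronglyMonotoneRel A₂ μ (MonOp.primalSol A₁ A₂))
    (hρ : MonOp.IsStronglyMonotoneRel (MonOp.inv A₁) ρ (MonOp.dualSol A₁ A₂) ∨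
      MonOp.IsStronglyMonotoneRel (MonOp.inv A₂) ρ (-MonOp.dualSol A₁ A₂))
    (γ : ℕ → ℝ) (hγ : ∀ n, γ n ∈ Γ) (γs : ℝ) (hγs : γs ∈ Γ)
    (hγlim : MonOp.ConvergesRLinearly γ γs)
    (x z y w : ℕ → H)
    (hz0 : z 0 = MonOp.resolvent (γ 0 • A₁) (x 0))
    (hy : ∀ n, y n = MonOp.resolvent (γ n • A₂) ((2 : ℝ) • z n - x n))
    (hw : ∀ n, w n = x n - z n + y n)
    (hz : ∀ n, z (n + 1) = MonOp.resolvent (γ n • A₁) (w n))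
    (hx : ∀ n, x (n + 1) =
      (γ (n + 1) / γ n) • w n + (1 - γ (n + 1) / γ n) • z (n + 1)) :
    ∃ xs zs gs : H,
      zs = MonOp.resolvent (γs • A₁) xs ∧ gs = γs⁻¹ • (xs - zs) ∧
      (xs ∈ Function.fixedPoints (MonOp.drOp A₁ A₂ γs) ∧
        MonOp.ConvergesRLinearly x xs ∧ MonOp.ConvergesRLinearly w xs) ∧
      (zs ∈ MonOp.primalSol A₁ A₂ ∧
        MonOp.ConvergesRLinearly z zs ∧ MonOp.ConvergesRLinearly y zs) ∧
      (gs ∈ MonOp.dualSol A₁ A₂ ∧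
        MonOp.ConvergesRLinearly (fun n => (γ n)⁻¹ • (x n - z n)) gs ∧
        MonOp.ConvergesRLinearly (fun n => (γ n)⁻¹ • (w n - y n)) gs) := by
  exact stmt12_general A₁ A₂ hA₁ hA₂ (hA₁p.hasProductSolutions hA₂p) μ ρ hμ hρ γ
    (fun n => hΓpos (hγ n)) γs (hΓpos hγs) hγlim x z y w hz0 hy hw hz hx
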